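/- Let μ be a Borel probability measure on ℝ with cumulative distribution function F(x) = μ((−∞, x]) and quantile function q_μ. Let w : [0, 1] → [0, 1] be nondecreasing and continuously differentiable with w(0) = 0 and w(1) = 1. Define G(x) := 1 − w(1 − F(x)); then G is a nondecreasing right-continuous function with limit 0 at −∞ and 1 at +∞, and for its associated Lebesgue–Stieltjes (Borel probability) measure ν and every Borel measurable u : ℝ → [0, ∞], ∫_ℝ u dν = ∫₀¹ u(q_μ(p)) · w′(1 − p) dp. -/

import Mathlib

open MeasureTheory Set

/-- The quantile function of a Borel measure `μ` on `ℝ`: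
`q_μ(p) = inf {x | p ≤ μ((-∞, x])}`. -/
noncomputable def quantile (μ : Measure ℝ) (p : ℝ) : ℝ :=
  sInf {x : ℝ | p ≤ (μ (Iic x)).toReal}

/-! The quantile function is the Galois inverse of the cdf: `q_μ(p) ≤ x ↔ p ≤ F(x)` on `(0, 1)`.
Hence pushing a measure `ρ` on `(0, 1)` forward along `q_μ` gives `(a, b]` the mass
`ρ (F(a), F(b)]`. With `v(p) = 1 - w(1 - p)`, so that `G = v ∘ F`, and `ρ` the measure of density
`v'(p) = w'(1 - p)`, the fundamental theorem of calculus identifies this mass with `G(b) - G(a)`.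
Integrability of `v'` comes from the monotonicity of `v`, so `v'` may be discontinuous and blow up
at the endpoints, as it does for the distortions `w(p) = p ^ γ` with `0 < γ < 1`. -/

open Filter Topology ProbabilityTheory

theorem tendsto_comp_of_continuousOn {α X Y : Type*} [TopologicalSpace X] [TopologicalSpace Y]
    {f : α → X} {v : X → Y} {s : Set X} (hv : ContinuousOn v s) (hf : ∀ x, f x ∈ s)
    {l : Filter α} {c : X} (hc : c ∈ s) (hl : Tendsto f l (𝓝 c)) :
    Tendsto (fun x ↦ v (f x)) l (𝓝 (v c)) :=
  (hv c hc).tendsto.comp (tendsto_nhdsWithin_iff.2 ⟨hl, Eventually.of_forall hf⟩)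

section Stieltjes

variable {R : Type*} [TopologicalSpace R]

theorem stieltjes_sInf_le_iff [ConditionallyCompleteLinearOrder R] [OrderTopology R]
    [DenselyOrdered R] [NoMaxOrder R] (f : StieltjesFunction R) {p : ℝ}
    (h_lt : ∃ y, f y < p) (h_le : ∃ y, p ≤ f y) (x : R) :
    sInf {y | p ≤ f y} ≤ x ↔ p ≤ f x := by
  constructor
  · intro hx
    have le_of_gt : ∀ y ∈ Ioi x, p ≤ f y := fun y hy ↦ by
      obtain ⟨z, hz, hzy⟩ := exists_lt_of_csInf_lt h_le (hx.trans_lt hy)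
      exact le_trans hz (f.mono hzy.le)
    exact ge_of_tendsto ((f.right_continuous x).mono Ioi_subset_Ici_self)
      (eventually_nhdsWithin_of_forall le_of_gt)
  · obtain ⟨y, hy⟩ := h_lt
    exact csInf_le ⟨y, fun z hz ↦ (f.mono.reflect_lt (hy.trans_le hz)).le⟩

variable [LinearOrder R] {s : Set ℝ} {v : ℝ → ℝ}

/-- The Stieltjes function `v ∘ f`, for `v` nondecreasing and continuous on a set containing the
range of `f`. It carries the Lebesgue–Stieltjes measure of a distorted cdf. -/
def stieltjesComp (f : StieltjesFunction R) (hf : ∀ x, f x ∈ s)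
    (hv_mono : MonotoneOn v s) (hv_cont : ContinuousOn v s) : StieltjesFunction R where
  toFun x := v (f x)
  mono' _ _ hxy := hv_mono (hf _) (hf _) (f.mono hxy)
  right_continuous' x := tendsto_comp_of_continuousOn hv_cont hf (hf x) (f.right_continuous x)

end Stieltjes

theorem measure_eq_stieltjes_measure (f : StieltjesFunction ℝ) {ν : Measure ℝ}
    (hν : ∀ a b, a ≤ b → ν (Ioc a b) = ENNReal.ofReal (f b - f a)) : ν = f.measure :=
  (Measure.ext_of_Ioc _ _ fun a b hab ↦ by rw [f.measure_Ioc, hν a b hab.le]).symm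

section MonotoneDerivative

variable {v v' : ℝ → ℝ} {a b : ℝ}

theorem nonneg_of_monotoneOn_of_hasDerivAt {s : Set ℝ} (hv_mono : MonotoneOn v s) {x d : ℝ}
    (hs : s ∈ 𝓝 x) (hd : HasDerivAt v d x) : 0 ≤ d := by
  rw [← hd.deriv, ← derivWithin_of_mem_nhds hs]
  exact hv_mono.derivWithin_nonneg

theorem integrableOn_Ioo_deriv_of_monotoneOn
    (hv_mono : MonotoneOn v (Icc a b)) (hv_cont : ContinuousOn v (Icc a b))
    (hv_deriv : ∀ x ∈ Ioo a b, HasDerivAt v (v' x) x) :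
    IntegrableOn v' (Ioo a b) := by
  refine IntegrableOn.mono_set ?_ Ioo_subset_Ioc_self
  exact intervalIntegral.integrableOn_deriv_of_nonneg hv_cont hv_deriv fun x hx ↦
    nonneg_of_monotoneOn_of_hasDerivAt hv_mono (Icc_mem_nhds hx.1 hx.2) (hv_deriv x hx)

theorem lintegral_Ioo_deriv_of_monotoneOn
    (hv_mono : MonotoneOn v (Icc a b)) (hv_cont : ContinuousOn v (Icc a b))
    (hv_deriv : ∀ x ∈ Ioo a b, HasDerivAt v (v' x) x) (hab : a ≤ b) :
    ∫⁻ x in Ioo a b, ENNReal.ofReal (v' x) = ENNReal.ofReal (v b - v a) := by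
  have hv'_int := integrableOn_Ioo_deriv_of_monotoneOn hv_mono hv_cont hv_deriv
  have hv'_nonneg : 0 ≤ᵐ[volume.restrict (Ioo a b)] v' :=
    ae_restrict_of_forall_mem measurableSet_Ioo fun x hx ↦
      nonneg_of_monotoneOn_of_hasDerivAt hv_mono (Icc_mem_nhds hx.1 hx.2) (hv_deriv x hx)
  rw [← ofReal_integral_eq_lintegral_ofReal hv'_int hv'_nonneg, ← integral_Ioc_eq_integral_Ioo,
    ← intervalIntegral.integral_of_le hab,
    intervalIntegral.integral_eq_sub_of_hasDerivAt_of_le hab hv_cont hv_deriv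
      ((intervalIntegrable_iff_integrableOn_Ioo_of_le hab).2 hv'_int)]

theorem withDensity_deriv_Ioc_of_monotoneOn
    (hv_mono : MonotoneOn v (Icc a b)) (hv_cont : ContinuousOn v (Icc a b))
    (hv_deriv : ∀ x ∈ Ioo a b, HasDerivAt v (v' x) x)
    {c d : ℝ} (hac : a ≤ c) (hcd : c ≤ d) (hdb : d ≤ b) :
    (volume.restrict (Ioo a b)).withDensity (fun x ↦ ENNReal.ofReal (v' x)) (Ioc c d) =
      ENNReal.ofReal (v d - v c) := by
  have hIcc : Icc c d ⊆ Icc a b := Icc_subset_Icc hac hdb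
  rw [withDensity_apply _ measurableSet_Ioc, Measure.restrict_congr_set Ioo_ae_eq_Ioc,
    Measure.restrict_restrict measurableSet_Ioc, inter_eq_left.2 (Ioc_subset_Ioc hac hdb),
    Measure.restrict_congr_set Ioo_ae_eq_Ioc.symm]
  exact lintegral_Ioo_deriv_of_monotoneOn (hv_mono.mono hIcc) (hv_cont.mono hIcc)
    (fun x hx ↦ hv_deriv x (Ioo_subset_Ioo hac hdb hx)) hcd

end MonotoneDerivative

theorem cdf_mem_Icc (μ : Measure ℝ) (x : ℝ) : cdf μ x ∈ Icc (0 : ℝ) 1 :=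
  ⟨cdf_nonneg μ x, cdf_le_one μ x⟩

section Quantile

variable (μ : Measure ℝ) [IsProbabilityMeasure μ]

theorem quantile_eq_sInf_le_cdf (p : ℝ) : quantile μ p = sInf {x | p ≤ cdf μ x} := by
  simp only [quantile, cdf_eq_real, measureReal_def]

variable {μ} {p : ℝ} {ρ : Measure ℝ}

theorem quantile_le_iff (hp : p ∈ Ioo (0 : ℝ) 1) (x : ℝ) :
    quantile μ p ≤ x ↔ p ≤ cdf μ x := by
  rw [quantile_eq_sInf_le_cdf]
  exact stieltjes_sInf_le_iff (cdf μ) ((tendsto_cdf_atBot μ).eventually_lt_const hp.1).exists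
    ((tendsto_cdf_atTop μ).eventually_const_le hp.2).exists x

theorem quantile_mem_Ioc_iff (hp : p ∈ Ioo (0 : ℝ) 1) (a b : ℝ) :
    quantile μ p ∈ Ioc a b ↔ p ∈ Ioc (cdf μ a) (cdf μ b) := by
  rw [mem_Ioc, mem_Ioc, quantile_le_iff hp, ← not_le, quantile_le_iff hp, not_le]

variable (μ) in
theorem monotoneOn_quantile : MonotoneOn (quantile μ) (Ioo (0 : ℝ) 1) := fun _ hp _ hq hpq ↦
  (quantile_le_iff hp _).2 (hpq.trans ((quantile_le_iff hq _).1 le_rfl))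

theorem aemeasurable_quantile (hρ : ∀ᵐ p ∂ρ, p ∈ Ioo (0 : ℝ) 1) :
    AEMeasurable (quantile μ) ρ := by
  rw [← Measure.restrict_eq_self_of_ae_mem hρ]
  exact aemeasurable_restrict_of_monotoneOn measurableSet_Ioo (monotoneOn_quantile μ)

theorem map_quantile_Ioc (hρ : ∀ᵐ p ∂ρ, p ∈ Ioo (0 : ℝ) 1) (a b : ℝ) :
    ρ.map (quantile μ) (Ioc a b) = ρ (Ioc (cdf μ a) (cdf μ b)) := by
  rw [Measure.map_apply_of_aemeasurable (aemeasurable_quantile hρ) measurableSet_Ioc]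
  exact measure_congr (hρ.mono fun p hp ↦ propext (quantile_mem_Ioc_iff hp a b))

variable {v v' : ℝ → ℝ} (hv_mono : MonotoneOn v (Icc (0 : ℝ) 1))
  (hv_cont : ContinuousOn v (Icc (0 : ℝ) 1))

theorem map_quantile_withDensity_deriv
    (hv_deriv : ∀ p ∈ Ioo (0 : ℝ) 1, HasDerivAt v (v' p) p) :
    ((volume.restrict (Ioo (0 : ℝ) 1)).withDensity fun p ↦ ENNReal.ofReal (v' p)).map
      (quantile μ) = (stieltjesComp (cdf μ) (cdf_mem_Icc μ) hv_mono hv_cont).measure := by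
  refine measure_eq_stieltjes_measure _ fun a b hab ↦ ?_
  rw [map_quantile_Ioc (withDensity_absolutelyContinuous _ _ |>.ae_le
    (ae_restrict_mem measurableSet_Ioo))]
  exact withDensity_deriv_Ioc_of_monotoneOn hv_mono hv_cont hv_deriv
    (cdf_nonneg μ a) (monotone_cdf μ hab) (cdf_le_one μ b)

theorem lintegral_stieltjesComp_cdf
    (hv_deriv : ∀ p ∈ Ioo (0 : ℝ) 1, HasDerivAt v (v' p) p)
    {u : ℝ → ENNReal} (hu : Measurable u) :
    ∫⁻ x, u x ∂(stieltjesComp (cdf μ) (cdf_mem_Icc μ) hv_mono hv_cont).measure =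
      ∫⁻ p in Ioo (0 : ℝ) 1, u (quantile μ p) * ENNReal.ofReal (v' p) := by
  have h_ac := withDensity_absolutelyContinuous (volume.restrict (Ioo (0 : ℝ) 1))
    fun p ↦ ENNReal.ofReal (v' p)
  have hq : AEMeasurable (quantile μ) (volume.restrict (Ioo (0 : ℝ) 1)) :=
    aemeasurable_quantile (ae_restrict_mem measurableSet_Ioo)
  have hv'_meas : AEMeasurable (fun p ↦ ENNReal.ofReal (v' p)) (volume.restrict (Ioo (0 : ℝ) 1)) :=
    (integrableOn_Ioo_deriv_of_monotoneOn hv_mono hv_cont hv_deriv).aemeasurable.ennreal_ofReal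
  rw [← map_quantile_withDensity_deriv hv_mono hv_cont hv_deriv,
    lintegral_map' hu.aemeasurable (hq.mono_ac h_ac),
    lintegral_withDensity_eq_lintegral_mul₀ hv'_meas
      (show AEMeasurable (fun p ↦ u (quantile μ p)) _ from hu.comp_aemeasurable hq)]
  simp only [Pi.mul_apply, mul_comm]

end Quantile

/-- The dual `p ↦ 1 - w (1 - p)` of a distortion `w`. Applying `w` to the survival function
`1 - F` amounts to applying its dual to the cdf `F`. -/
def dualDistortion (w : ℝ → ℝ) (p : ℝ) : ℝ := 1 - w (1 - p)

section DualDistortion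

variable {w : ℝ → ℝ}

theorem monotoneOn_dualDistortion (hw : MonotoneOn w (Icc 0 1)) :
    MonotoneOn (dualDistortion w) (Icc 0 1) := fun _ hp _ hq hpq ↦
  sub_le_sub_left (hw (Icc.one_sub_mem hq) (Icc.one_sub_mem hp) (sub_le_sub_left hpq 1)) 1

theorem continuousOn_dualDistortion (hw : ContinuousOn w (Icc 0 1)) :
    ContinuousOn (dualDistortion w) (Icc 0 1) :=
  continuousOn_const.sub (hw.comp (by fun_prop) fun _ ↦ Icc.one_sub_mem)

theorem hasDerivAt_dualDistortion {d p : ℝ} (hw : HasDerivAt w d (1 - p)) :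
    HasDerivAt (dualDistortion w) d p :=
  neg_neg d ▸ (hw.comp_const_sub 1 p).const_sub 1

end DualDistortion

theorem distorted_measure_quantile_general (μ : Measure ℝ) [IsProbabilityMeasure μ]
    {w w' : ℝ → ℝ} (hw_mono : MonotoneOn w (Icc (0 : ℝ) 1))
    (hw_cont : ContinuousOn w (Icc (0 : ℝ) 1)) (hw0 : w 0 = 0) (hw1 : w 1 = 1)
    (hw_deriv : ∀ x ∈ Ioo (0 : ℝ) 1, HasDerivAt w (w' x) x)
    {G : ℝ → ℝ} (hG : G = fun x ↦ 1 - w (1 - cdf μ x)) :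
    Monotone G ∧
    (∀ x, ContinuousWithinAt G (Ici x) x) ∧
    Tendsto G atBot (𝓝 0) ∧
    Tendsto G atTop (𝓝 1) ∧
    ∀ ν : Measure ℝ, (∀ a b, a ≤ b → ν (Ioc a b) = ENNReal.ofReal (G b - G a)) →
      IsProbabilityMeasure ν ∧
      ∀ u : ℝ → ENNReal, Measurable u →
        ∫⁻ x, u x ∂ν =
          ∫⁻ p in Ioo (0 : ℝ) 1, u (quantile μ p) * ENNReal.ofReal (w' (1 - p)) := by
  have hv_mono := monotoneOn_dualDistortion hw_mono
  have hv_cont := continuousOn_dualDistortion hw_cont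
  have hv_deriv : ∀ p ∈ Ioo (0 : ℝ) 1, HasDerivAt (dualDistortion w) (w' (1 - p)) p :=
    fun p hp ↦ hasDerivAt_dualDistortion (hw_deriv _ (Ioo.one_sub_mem hp))
  let distortedCdf := stieltjesComp (cdf μ) (cdf_mem_Icc μ) hv_mono hv_cont
  obtain rfl : G = distortedCdf := hG
  have h_bot : Tendsto distortedCdf atBot (𝓝 0) := by
    rw [← show dualDistortion w 0 = 0 by simp [dualDistortion, hw1]]
    exact tendsto_comp_of_continuousOn hv_cont (cdf_mem_Icc μ) (left_mem_Icc.2 zero_le_one)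
      (tendsto_cdf_atBot μ)
  have h_top : Tendsto distortedCdf atTop (𝓝 1) := by
    rw [← show dualDistortion w 1 = 1 by simp [dualDistortion, hw0]]
    exact tendsto_comp_of_continuousOn hv_cont (cdf_mem_Icc μ) (right_mem_Icc.2 zero_le_one)
      (tendsto_cdf_atTop μ)
  refine ⟨distortedCdf.mono, distortedCdf.right_continuous, h_bot, h_top, fun ν hν ↦ ?_⟩
  obtain rfl := measure_eq_stieltjes_measure distortedCdf hν
  exact ⟨distortedCdf.isProbabilityMeasure h_bot h_top,
    fun u hu ↦ lintegral_stieltjesComp_cdf hv_mono hv_cont hv_deriv hu⟩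

/-- Distorted-expectation (rank-dependent utility) identity: with `F` the cdf of `μ`,
`w : [0,1] → [0,1]` a nondecreasing C¹ distortion with `w(0)=0`, `w(1)=1`, the function
`G(x) = 1 - w(1 - F(x))` is a nondecreasing right-continuous cdf (limits `0` at `-∞`, `1` at
`+∞`), and its Lebesgue–Stieltjes measure `ν` satisfies
`∫ u dν = ∫₀¹ u(q_μ(p)) w'(1-p) dp` for every Borel `u : ℝ → [0, ∞]`. -/
theorem distorted_measure_quantile
    (μ : Measure ℝ) [IsProbabilityMeasure μ]
    (F : ℝ → ℝ) (hF : F = fun x => (μ (Iic x)).toReal)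
    (w w' : ℝ → ℝ)
    (hw_mono : MonotoneOn w (Icc (0:ℝ) 1))
    (hw_maps : ∀ x ∈ Icc (0:ℝ) 1, w x ∈ Icc (0:ℝ) 1)
    (hw0 : w 0 = 0) (hw1 : w 1 = 1)
    (hw_deriv : ∀ x ∈ Icc (0:ℝ) 1, HasDerivWithinAt w (w' x) (Icc (0:ℝ) 1) x)
    (hw'_cont : ContinuousOn w' (Icc (0:ℝ) 1))
    (G : ℝ → ℝ) (hG : G = fun x => 1 - w (1 - F x)) :
    Monotone G ∧
    (∀ x, ContinuousWithinAt G (Ici x) x) ∧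
    Filter.Tendsto G Filter.atBot (nhds 0) ∧
    Filter.Tendsto G Filter.atTop (nhds 1) ∧
    (∀ ν : Measure ℝ,
      (∀ a b : ℝ, a ≤ b → ν (Ioc a b) = ENNReal.ofReal (G b - G a)) →
      IsProbabilityMeasure ν ∧
      ∀ u : ℝ → ENNReal, Measurable u →
        ∫⁻ x, u x ∂ν
          = ∫⁻ p in Ioo (0:ℝ) 1, u (quantile μ p) * ENNReal.ofReal (w' (1 - p))) := by
  have hF_cdf : F = cdf μ := hF.trans (funext fun x ↦ (cdf_eq_real μ x).symm)
  exact distorted_measure_quantile_general μ hw_mono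
    (fun x hx ↦ (hw_deriv x hx).continuousWithinAt) hw0 hw1
    (fun x hx ↦ (hw_deriv x (Ioo_subset_Icc_self hx)).hasDerivAt (Icc_mem_nhds hx.1 hx.2))
    (hF_cdf ▸ hG)
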